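/- Let S ∈ ℝ^{d×d} be symmetric, let σ > 0, let U ∈ ℝ^{d×p} satisfy UᵀU = I_p, let Δ = diag(δ₁,…,δ_p) with δ_j ≥ σ² for all j, let L = diag(l₁,…,l_p) with l_j² = δ_j - σ², let R ∈ ℝ^{p×p} be orthogonal (RᵀR = I_p), and suppose S U = U Δ (the columns of U are eigenvectors of S with eigenvalues δ_j). Define Λ := U L Rᵀ. Then S (ΛΛᵀ + σ²I_d)⁻¹ Λ = Λ; i.e., Λ = U(Δ - σ²I)^{1/2}Rᵀ satisfies the stationarity equation of the PPCA log-likelihood. -/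

import Mathlib

open Matrix

/-!
Put `M = ΛΛᴴ + c I`. Orthonormality of the columns of `R` and `U` gives `M = U B + c I` with
`B = L Lᴴ Uᴴ` and `B U + c I = Δ`. The push-through identity
`(U B + c I)⁻¹ U = U (B U + c I)⁻¹` then reads `M⁻¹ U = U Δ⁻¹`, so `S M⁻¹ U = U Δ Δ⁻¹ = U`, and `Λ`
has the left factor `U`.
-/

section PushThrough

variable {α n k : Type*} [CommRing α] [Fintype n] [DecidableEq n] [Fintype k] [DecidableEq k]

theorem isUnit_one_add_mul_comm (A : Matrix n k α) (B : Matrix k n α) :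
    IsUnit (1 + A * B) ↔ IsUnit (1 + B * A) := by
  rw [isUnit_iff_isUnit_det, isUnit_iff_isUnit_det, det_one_add_mul_comm]

theorem isUnit_mul_add_smul_one_comm {c : α} (hc : IsUnit c) (A : Matrix n k α)
    (B : Matrix k n α) : IsUnit (A * B + c • 1) ↔ IsUnit (B * A + c • 1) := by
  obtain ⟨u, rfl⟩ := hc
  have hAB : A * B + (u : α) • 1 = u • (1 + (u⁻¹ • A) * B) := by
    rw [smul_add, Matrix.smul_mul, smul_inv_smul, add_comm, Units.smul_def]
  have hBA : B * A + (u : α) • 1 = u • (1 + B * (u⁻¹ • A)) := by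
    rw [smul_add, Matrix.mul_smul, smul_inv_smul, add_comm, Units.smul_def]
  rw [hAB, hBA, isUnit_smul_iff, isUnit_smul_iff, isUnit_one_add_mul_comm]

theorem inv_mul_add_smul_one_mul {c : α} (hc : IsUnit c) {A : Matrix n k α} {B : Matrix k n α}
    (hBA : IsUnit (B * A + c • 1)) :
    (A * B + c • 1)⁻¹ * A = A * (B * A + c • 1)⁻¹ := by
  have hAB : IsUnit (A * B + c • 1) := (isUnit_mul_add_smul_one_comm hc A B).mpr hBA
  have intertwine : (A * B + c • 1) * A = A * (B * A + c • 1) := by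
    simp only [Matrix.add_mul, Matrix.mul_add, Matrix.mul_assoc, Matrix.smul_mul, Matrix.mul_smul,
      Matrix.one_mul, Matrix.mul_one]
  rw [isUnit_iff_isUnit_det] at hAB hBA
  calc (A * B + c • 1)⁻¹ * A
      = (A * B + c • 1)⁻¹ * (A * (B * A + c • 1) * (B * A + c • 1)⁻¹) := by
        rw [mul_nonsing_inv_cancel_right _ _ hBA]
    _ = A * (B * A + c • 1)⁻¹ := by
        rw [← intertwine, Matrix.mul_assoc, nonsing_inv_mul_cancel_left _ _ hAB]

end PushThrough

theorem mul_conjTranspose_mul_conjTranspose_self {α m k q : Type*} [Semiring α] [StarRing α]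
    [Fintype k] [DecidableEq k] [Fintype q] (A : Matrix m k α) {R : Matrix q k α}
    (hR : Rᴴ * R = 1) : (A * Rᴴ) * (A * Rᴴ)ᴴ = A * Aᴴ := by
  rw [conjTranspose_mul, conjTranspose_conjTranspose, Matrix.mul_assoc, ← Matrix.mul_assoc Rᴴ, hR,
    Matrix.one_mul]

theorem diagonal_mul_conjTranspose_add_smul_one {α k : Type*} [Ring α] [StarRing α] [Fintype k]
    [DecidableEq k] {c : α} {l δ : k → α} (hl : ∀ j, l j * star (l j) = δ j - c) :
    diagonal l * (diagonal l)ᴴ + c • 1 = diagonal δ := by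
  simp only [diagonal_conjTranspose, diagonal_mul_diagonal, Pi.star_apply, hl,
    smul_one_eq_diagonal, diagonal_add, sub_add_cancel]

theorem ppca_stationarity_general {α n k q : Type*} [CommRing α] [StarRing α] [Fintype n]
    [DecidableEq n] [Fintype k] [DecidableEq k] [Fintype q] (S : Matrix n n α)
    {c : α} (hc : IsUnit c) {U : Matrix n k α} (hU : Uᴴ * U = 1)
    {δ : k → α} (hδ : ∀ j, IsUnit (δ j)) {l : k → α} (hl : ∀ j, l j * star (l j) = δ j - c)
    {R : Matrix q k α} (hR : Rᴴ * R = 1) (hSU : S * U = U * diagonal δ)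
    {Λ : Matrix n q α} (hΛ : Λ = U * diagonal l * Rᴴ) :
    S * (Λ * Λᴴ + c • 1)⁻¹ * Λ = Λ := by
  set B := diagonal l * (diagonal l)ᴴ * Uᴴ with hB
  have hΛΛ : Λ * Λᴴ = U * B := by
    rw [hΛ, mul_conjTranspose_mul_conjTranspose_self _ hR, conjTranspose_mul, hB]
    simp only [Matrix.mul_assoc]
  have hBU : B * U + c • 1 = diagonal δ := by
    rw [hB, Matrix.mul_assoc, hU, Matrix.mul_one, diagonal_mul_conjTranspose_add_smul_one hl]
  have hΔ : IsUnit (diagonal δ) := isUnit_diagonal.mpr (Pi.isUnit_iff.mpr hδ)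
  have hSMU : S * (Λ * Λᴴ + c • 1)⁻¹ * U = U := by
    rw [hΛΛ, Matrix.mul_assoc, inv_mul_add_smul_one_mul hc (hBU ▸ hΔ), hBU, ← Matrix.mul_assoc,
      hSU, mul_nonsing_inv_cancel_right _ _ ((isUnit_iff_isUnit_det _).mp hΔ)]
  calc S * (Λ * Λᴴ + c • 1)⁻¹ * Λ
      = S * (Λ * Λᴴ + c • 1)⁻¹ * U * (diagonal l * Rᴴ) := by
        rw [Matrix.mul_assoc _ U, ← Matrix.mul_assoc U, ← hΛ]
    _ = Λ := by rw [hSMU, ← Matrix.mul_assoc, ← hΛ]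

/-- **The PPCA stationarity equation.** Let `S ∈ ℝ^{d×d}` be symmetric, `σ > 0`,
`U ∈ ℝ^{d×p}` with orthonormal columns (`UᵀU = I_p`), `Δ = diag(δ)` with `δ_j ≥ σ²`,
`L = diag(l)` with `l_j² = δ_j - σ²`, `R ∈ ℝ^{p×p}` orthogonal, and suppose
`S U = U Δ` (the columns of `U` are eigenvectors of `S` with eigenvalues `δ_j`).
Then `Λ := U L Rᵀ = U(Δ - σ²I)^{1/2}Rᵀ` satisfies the stationarity equation of the
PPCA log-likelihood: `S (ΛΛᵀ + σ²I_d)⁻¹ Λ = Λ`. -/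
theorem ppca_stationarity {d p : ℕ} (S : Matrix (Fin d) (Fin d) ℝ) (hS : S.IsSymm)
    (σ : ℝ) (hσ : 0 < σ)
    (U : Matrix (Fin d) (Fin p) ℝ) (hU : Uᵀ * U = 1)
    (δ : Fin p → ℝ) (hδ : ∀ j, σ ^ 2 ≤ δ j)
    (l : Fin p → ℝ) (hl : ∀ j, l j ^ 2 = δ j - σ ^ 2)
    (R : Matrix (Fin p) (Fin p) ℝ) (hR : Rᵀ * R = 1)
    (hSU : S * U = U * Matrix.diagonal δ)
    (Λ : Matrix (Fin d) (Fin p) ℝ) (hΛ : Λ = U * Matrix.diagonal l * Rᵀ) :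
    S * (Λ * Λᵀ + σ ^ 2 • (1 : Matrix (Fin d) (Fin d) ℝ))⁻¹ * Λ = Λ := by
  have hσ2 : 0 < σ ^ 2 := pow_pos hσ 2
  simp only [← conjTranspose_eq_transpose_of_trivial] at hU hR hΛ ⊢
  exact ppca_stationarity_general S hσ2.ne'.isUnit hU
    (fun j => (hσ2.trans_le (hδ j)).ne'.isUnit)
    (fun j => by rw [star_trivial, ← sq, hl j]) hR hSU hΛ
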